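/- Let (V,Q) be a regular 5-dimensional quadratic space over a field k of characteristic not 2. If g ∈ Cliff₀(V) satisfies g*g ∈ k^×, then g⁻¹Vg = V; hence GSpin(V) = {g ∈ Cliff₀(V) : g*g ∈ k^×}. -/

import Mathlib

/-!
Write `g*` for `reverse g`. The element `x = g* u g` is odd and fixed by reversal. In an orthogonal
basis, reversal acts on a monomial of degree `m` by `(-1) ^ (m choose 2)`, so only the degrees
`m ≡ 1 mod 4` occur in `x`; in dimension at most five, `x` is a vector plus, in dimension five, a
multiple of the top monomial. In odd dimension the top monomial is central, which makes the top
coefficient `τ` a trace: `τ (x y) = τ (y x)`. Hence, if `g g* = a` is a scalar,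
`τ (g* u g) = τ (u g g*) = a τ(u) = 0`, and `g* u g` is a vector.
-/

open CliffordAlgebra Module

section Monomial

variable {R M I : Type*} [CommRing R] [AddCommGroup M] [Module R M]
variable {Q : QuadraticForm R M} {v : I → M} {i : I} {l l' : List I}

/-- The product in the Clifford algebra of the vectors `v i`, for `i` running through a list.
When `v` is an orthogonal basis and the list has no duplicates, these are the usual monomials
`e_S`, up to sign. Lists rather than finsets of indices are used so that `I` needs no order. -/
def cliffordMonomial (Q : QuadraticForm R M) (v : I → M) (l : List I) : CliffordAlgebra Q :=
  (l.map fun i => ι Q (v i)).prod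

@[simp]
theorem cliffordMonomial_nil : cliffordMonomial Q v [] = 1 := rfl

@[simp]
theorem cliffordMonomial_cons (i : I) (l : List I) :
    cliffordMonomial Q v (i :: l) = ι Q (v i) * cliffordMonomial Q v l :=
  List.prod_cons

theorem cliffordMonomial_mul_ι (hv : Pairwise fun i j => Q.IsOrtho (v i) (v j)) (hi : i ∉ l) :
    cliffordMonomial Q v l * ι Q (v i)
      = (-1 : R) ^ l.length • (ι Q (v i) * cliffordMonomial Q v l) := by
  induction l with
  | nil => simp
  | cons j l ih =>
    obtain ⟨hij, hil⟩ := List.ne_and_not_mem_of_not_mem_cons hi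
    rw [cliffordMonomial_cons, mul_assoc, ih hil, mul_smul_comm, ι_mul_ι_mul_of_isOrtho _ (hv hij),
      List.length_cons, pow_succ, mul_neg_one, neg_smul, smul_neg, neg_neg]

theorem exists_cliffordMonomial_eq_units_smul_of_perm
    (hv : Pairwise fun i j => Q.IsOrtho (v i) (v j)) (h : l.Perm l') (hl : l.Nodup) :
    ∃ s : ℤˣ, cliffordMonomial Q v l = s • cliffordMonomial Q v l' := by
  induction h with
  | nil => exact ⟨1, (one_smul _ _).symm⟩
  | cons i _ ih =>
    obtain ⟨s, hs⟩ := ih hl.of_cons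
    exact ⟨s, by rw [cliffordMonomial_cons, cliffordMonomial_cons, hs, mul_smul_comm]⟩
  | swap i j l =>
    have hji : j ≠ i := List.ne_of_not_mem_cons hl.notMem
    refine ⟨-1, ?_⟩
    simp only [cliffordMonomial_cons, Units.neg_smul, one_smul]
    exact ι_mul_ι_mul_of_isOrtho _ (hv hji)
  | trans h₁ _ ih₁ ih₂ =>
    obtain ⟨s₁, hs₁⟩ := ih₁ hl
    obtain ⟨s₂, hs₂⟩ := ih₂ (h₁.nodup_iff.1 hl)
    exact ⟨s₁ * s₂, by rw [hs₁, hs₂, smul_smul]⟩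

theorem reverse_cliffordMonomial (hv : Pairwise fun i j => Q.IsOrtho (v i) (v j))
    (hl : l.Nodup) :
    reverse (cliffordMonomial Q v l) = (-1 : R) ^ l.length.choose 2 • cliffordMonomial Q v l := by
  induction l with
  | nil => simp
  | cons i l ih =>
    obtain ⟨hi, hl⟩ := List.nodup_cons.1 hl
    rw [cliffordMonomial_cons, reverse.map_mul, ih hl, reverse_ι, smul_mul_assoc,
      cliffordMonomial_mul_ι hv hi, smul_smul, ← pow_add, List.length_cons,
      Nat.choose_succ_succ' _ 1,   Nat.choose_one_right, add_comm]

theorem involute_cliffordMonomial (l : List I) :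
    involute (cliffordMonomial Q v l) = (-1 : R) ^ l.length • cliffordMonomial Q v l := by
  simpa [Function.comp_def, cliffordMonomial] using involute_prod_map_ι (Q := Q) (l.map v)

theorem contractLeft_cliffordMonomial {d : Dual R M} (h : ∀ i ∈ l, d (v i) = 0) :
    contractLeft d (cliffordMonomial Q v l) = 0 := by
  induction l with
  | nil => exact contractLeft_one Q d
  | cons i l ih =>
    obtain ⟨hi, hl⟩ := List.forall_mem_cons.1 h
    rw [cliffordMonomial_cons, contractLeft_ι_mul, hi, ih hl, zero_smul, mul_zero, sub_zero]

theorem changeForm_cliffordMonomial {Q' : QuadraticForm R M} {B : LinearMap.BilinForm R M}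
    (hB : B.toQuadraticMap = Q' - Q) (hv : Pairwise fun i j => B (v i) (v j) = 0)
    (hl : l.Nodup) :
    changeForm hB (cliffordMonomial Q v l) = cliffordMonomial Q' v l := by
  induction l with
  | nil => exact changeForm_one hB
  | cons i l ih =>
    obtain ⟨hi, hl⟩ := List.nodup_cons.1 hl
    have h_contract : contractLeft (B (v i)) (cliffordMonomial Q' v l) = 0 :=
      contractLeft_cliffordMonomial fun j hj => hv (ne_of_mem_of_not_mem hj hi).symm
    rw [cliffordMonomial_cons, changeForm_ι_mul, ih hl, h_contract, sub_zero,
      cliffordMonomial_cons]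

theorem equivExterior_cliffordMonomial [Invertible (2 : R)]
    (hv : Pairwise fun i j => Q.IsOrtho (v i) (v j)) (hl : l.Nodup) :
    equivExterior Q (cliffordMonomial Q v l) = (l.map fun i => ExteriorAlgebra.ι R (v i)).prod := by
  have hB : Pairwise fun i j => QuadraticMap.associated (-Q) (v i) (v j) = 0 := fun i j hij => by
    simp only [map_neg, LinearMap.neg_apply, QuadraticMap.associated_isOrtho.2 (hv hij), neg_zero]
  exact changeForm_cliffordMonomial changeForm.associated_neg_proof hB hl

variable [DecidableEq I]

theorem exists_ι_mul_cliffordMonomial_eq_smul_erase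
    (hv : Pairwise fun i j => Q.IsOrtho (v i) (v j)) (hl : l.Nodup) (hi : i ∈ l) :
    ∃ c : R, ι Q (v i) * cliffordMonomial Q v l = c • cliffordMonomial Q v (l.erase i) := by
  obtain ⟨s, hs⟩ :=
    exists_cliffordMonomial_eq_units_smul_of_perm hv (List.perm_cons_erase hi) hl
  refine ⟨s • Q (v i), ?_⟩
  rw [hs, cliffordMonomial_cons, mul_smul_comm, ← mul_assoc, ι_sq_scalar, ← Algebra.smul_def,
    smul_assoc]

theorem exists_cliffordMonomial_mul_ι_eq_smul_erase
    (hv : Pairwise fun i j => Q.IsOrtho (v i) (v j)) (hl : l.Nodup) (hi : i ∈ l) :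
    ∃ c : R, cliffordMonomial Q v l * ι Q (v i) = c • cliffordMonomial Q v (l.erase i) := by
  obtain ⟨s, hs⟩ :=
    exists_cliffordMonomial_eq_units_smul_of_perm hv (List.perm_cons_erase hi) hl
  refine ⟨s • ((-1) ^ (l.erase i).length * Q (v i)), ?_⟩
  rw [hs, cliffordMonomial_cons, smul_mul_assoc, mul_assoc,
    cliffordMonomial_mul_ι hv hl.not_mem_erase, mul_smul_comm, ← mul_assoc, ι_sq_scalar,
    ← Algebra.smul_def, smul_smul, smul_assoc]

end Monomial

section Basis

variable {R M I : Type*} [CommRing R] [AddCommGroup M] [Module R M]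
variable {Q : QuadraticForm R M}

theorem span_cliffordMonomial_nodup (v : Basis I R M)
    (hv : Pairwise fun i j => Q.IsOrtho (v i) (v j)) :
    Submodule.span R (cliffordMonomial Q v '' {l | l.Nodup}) = ⊤ := by
  classical
  set S := Submodule.span R (cliffordMonomial Q v '' {l | l.Nodup})
  have mem_S : ∀ l : List I, l.Nodup → cliffordMonomial Q v l ∈ S := fun l hl =>
    Submodule.subset_span ⟨l, hl, rfl⟩
  have basis_mul_mem : ∀ i, S ≤ S.comap (LinearMap.mulLeft R (ι Q (v i))) := by
    refine fun i => Submodule.span_le.2 ?_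
    rintro _ ⟨l, hl, rfl⟩
    change ι Q (v i) * cliffordMonomial Q v l ∈ S
    by_cases hi : i ∈ l
    · obtain ⟨c, hc⟩ := exists_ι_mul_cliffordMonomial_eq_smul_erase hv hl hi
      exact hc ▸ S.smul_mem c (mem_S _ (hl.erase i))
    · exact mem_S (i :: l) (List.nodup_cons.2 ⟨hi, hl⟩)
  have vector_mul_mem : ∀ w, ∀ x ∈ S, ι Q w * x ∈ S := fun w x hx => by
    have h_le : Submodule.span R (Set.range v) ≤ S.comap (LinearMap.mulRight R x ∘ₗ ι Q) :=
      Submodule.span_le.2 (Set.range_subset_iff.2 fun i => basis_mul_mem i hx)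
    exact h_le (v.mem_span w)
  refine eq_top_iff.2 fun x _ => ?_
  induction x using CliffordAlgebra.left_induction with
  | algebraMap r =>
    rw [Algebra.algebraMap_eq_smul_one]
    exact S.smul_mem r (mem_S [] List.nodup_nil)
  | add x y hx hy => exact S.add_mem (hx trivial) (hy trivial)
  | ι_mul x w hx => exact vector_mul_mem w x (hx trivial)

theorem finite_cliffordAlgebra_of_orthogonal_basis [Finite I] (v : Basis I R M)
    (hv : Pairwise fun i j => Q.IsOrtho (v i) (v j)) : Module.Finite R (CliffordAlgebra Q) := by
  classical
  have := Fintype.ofFinite I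
  have h_nodup : {l : List I | l.Nodup}.Finite :=
    inferInstanceAs (Finite {l : List I // l.Nodup})
  exact ⟨span_cliffordMonomial_nodup v hv ▸ Submodule.fg_span (h_nodup.image _)⟩

theorem one_add_neg_one_pow_choose_two_mul_eq_zero {m : ℕ} (hm : m % 4 ≠ 1) :
    (1 + (-1) ^ m.choose 2) * (1 - (-1) ^ m) = (0 : R) := by
  rcases m.even_or_odd with h_even | h_odd
  · rw [h_even.neg_one_pow, sub_self, mul_zero]
  · obtain ⟨q, rfl⟩ : ∃ q, m = 4 * q + 3 := ⟨m / 4, by have := Nat.odd_iff.1 h_odd; omega⟩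
    have h_choose : (4 * q + 3).choose 2 = 2 * ((4 * q + 3) * q + 2 * q + 1) + 1 := by
      rw [Nat.choose_two_right, Nat.add_sub_assoc (by norm_num)]
      exact Nat.div_eq_of_eq_mul_left two_pos (by ring)
    rw [h_choose, (odd_two_mul_add_one _).neg_one_pow, add_neg_cancel, zero_mul]

theorem mem_span_cliffordMonomial_of_involute_eq_neg_of_reverse_eq [Invertible (2 : R)]
    (v : Basis I R M) (hv : Pairwise fun i j => Q.IsOrtho (v i) (v j)) {x : CliffordAlgebra Q}
    (h_odd : involute x = -x) (h_rev : reverse x = x) :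
    x ∈ Submodule.span R (cliffordMonomial Q v '' {l | l.Nodup ∧ l.length % 4 = 1}) := by
  set S := Submodule.span R (cliffordMonomial Q v '' {l | l.Nodup ∧ l.length % 4 = 1})
  let P : CliffordAlgebra Q →ₗ[R] CliffordAlgebra Q :=
    (LinearMap.id + reverse) ∘ₗ (LinearMap.id - involute.toLinearMap)
  have P_apply (y : CliffordAlgebra Q) : P y = y - involute y + reverse (y - involute y) := rfl
  have P_x : P x = (2 : R) • (2 : R) • x := by
    rw [P_apply, h_odd, sub_neg_eq_add, map_add, h_rev, two_smul, two_smul]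
  have P_mem : Submodule.span R (cliffordMonomial Q v '' {l | l.Nodup}) ≤ S.comap P := by
    refine Submodule.span_le.2 ?_
    rintro _ ⟨l, hl, rfl⟩
    change P (cliffordMonomial Q v l) ∈ S
    have P_monomial : P (cliffordMonomial Q v l) =
        ((1 + (-1) ^ l.length.choose 2) * (1 - (-1) ^ l.length) : R) • cliffordMonomial Q v l := by
      rw [P_apply, involute_cliffordMonomial, map_sub, map_smul, reverse_cliffordMonomial hv hl]
      module
    by_cases h_one : l.length % 4 = 1
    · exact P_monomial ▸ S.smul_mem _ (Submodule.subset_span ⟨l, ⟨hl, h_one⟩, rfl⟩)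
    · rw [P_monomial, one_add_neg_one_pow_choose_two_mul_eq_zero h_one, zero_smul]
      exact S.zero_mem
  rw [span_cliffordMonomial_nodup v hv] at P_mem
  have x_eq : (⅟2 : R) • (⅟2 : R) • P x = x := by
    rw [P_x, invOf_smul_smul, invOf_smul_smul]
  exact x_eq ▸ S.smul_mem _ (S.smul_mem _ (P_mem trivial))

end Basis

section TopCoeff

variable {R M : Type*} [CommRing R] [Invertible (2 : R)] [AddCommGroup M] [Module R M]
variable {Q : QuadraticForm R M} {n : ℕ} (v : Basis (Fin n) R M)

/-- The coefficient of the top-degree monomial `e₀ ⋯ eₙ₋₁` of an element of the Clifford algebra,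
read off through the linear identification with the exterior algebra. -/
noncomputable def topCoeff : CliffordAlgebra Q →ₗ[R] R :=
  ExteriorAlgebra.liftAlternating (Pi.single n v.det) ∘ₗ (equivExterior Q).toLinearMap

variable {v}

theorem topCoeff_cliffordMonomial_finRange (hv : Pairwise fun i j => Q.IsOrtho (v i) (v j)) :
    topCoeff v (cliffordMonomial Q v (List.finRange n)) = 1 := by
  rw [topCoeff, LinearMap.comp_apply, LinearEquiv.coe_coe,
    equivExterior_cliffordMonomial hv (List.nodup_finRange n), ← List.ofFn_eq_map,
    ← ExteriorAlgebra.ιMulti_apply, ExteriorAlgebra.liftAlternating_apply_ιMulti,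
    Pi.single_eq_same, v.det_self]

theorem topCoeff_cliffordMonomial_of_length_ne
    (hv : Pairwise fun i j => Q.IsOrtho (v i) (v j)) {l : List (Fin n)} (hl : l.Nodup)
    (h : l.length ≠ n) : topCoeff v (cliffordMonomial Q v l) = 0 := by
  have h_list : (l.map fun i => ExteriorAlgebra.ι R (v i))
      = List.ofFn fun j => ExteriorAlgebra.ι R (v (l.get j)) := by
    conv_lhs => rw [← List.ofFn_get l, List.map_ofFn]
    rfl
  rw [topCoeff, LinearMap.comp_apply, LinearEquiv.coe_coe, equivExterior_cliffordMonomial hv hl,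
    h_list, ← ExteriorAlgebra.ιMulti_apply, ExteriorAlgebra.liftAlternating_apply_ιMulti,
    Pi.single_eq_of_ne h, AlternatingMap.zero_apply]

theorem topCoeff_ι (hn : n ≠ 1) (w : M) : topCoeff v (ι Q w) = 0 := by
  have h_ι : equivExterior Q (ι Q w) = ExteriorAlgebra.ι R w :=
    changeForm_ι changeForm.associated_neg_proof w
  rw [topCoeff, LinearMap.comp_apply, LinearEquiv.coe_coe, h_ι, ExteriorAlgebra.liftAlternating_ι,
    Pi.single_eq_of_ne hn.symm, AlternatingMap.zero_apply]

theorem topCoeff_ι_mul_cliffordMonomial (hv : Pairwise fun i j => Q.IsOrtho (v i) (v j))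
    (hn : Odd n) (i : Fin n) {l : List (Fin n)} (hl : l.Nodup) :
    topCoeff v (ι Q (v i) * cliffordMonomial Q v l)
      = topCoeff v (cliffordMonomial Q v l * ι Q (v i)) := by
  by_cases hi : i ∈ l
  · have h_length : (l.erase i).length ≠ n := by
      have := List.length_erase_add_one hi
      have := hl.length_le_card
      rw [Fintype.card_fin] at this
      omega
    have h_top := topCoeff_cliffordMonomial_of_length_ne hv (hl.erase i) h_length
    obtain ⟨c, hc⟩ := exists_ι_mul_cliffordMonomial_eq_smul_erase hv hl hi
    obtain ⟨c', hc'⟩ := exists_cliffordMonomial_mul_ι_eq_smul_erase hv hl hi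
    rw [hc, hc', map_smul, map_smul, h_top, smul_zero, smul_zero]
  rw [cliffordMonomial_mul_ι hv hi, map_smul]
  rcases l.length.even_or_odd with h_even | h_odd
  · rw [h_even.neg_one_pow, one_smul]
  · have h_length : (i :: l).length ≠ n := by
      rw [List.length_cons]
      exact fun h => Nat.not_odd_iff_even.2 h_odd.add_one (by rwa [h])
    rw [← cliffordMonomial_cons,
      topCoeff_cliffordMonomial_of_length_ne hv (List.nodup_cons.2 ⟨hi, hl⟩) h_length, smul_zero]

theorem topCoeff_ι_mul (hv : Pairwise fun i j => Q.IsOrtho (v i) (v j)) (hn : Odd n)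
    (w : M) (x : CliffordAlgebra Q) : topCoeff v (ι Q w * x) = topCoeff v (x * ι Q w) := by
  let B : LinearMap.BilinForm R (CliffordAlgebra Q) :=
    (LinearMap.mul R (CliffordAlgebra Q)).compr₂ (topCoeff v)
  have h_eq : B ∘ₗ ι Q = B.flip ∘ₗ ι Q := by
    refine v.ext fun i => LinearMap.ext_on (span_cliffordMonomial_nodup v hv) ?_
    rintro _ ⟨l, hl, rfl⟩
    exact topCoeff_ι_mul_cliffordMonomial hv hn i hl
  exact LinearMap.congr_fun₂ h_eq w x

theorem topCoeff_mul_comm (hv : Pairwise fun i j => Q.IsOrtho (v i) (v j)) (hn : Odd n)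
    (x y : CliffordAlgebra Q) : topCoeff v (x * y) = topCoeff v (y * x) := by
  induction x using CliffordAlgebra.induction generalizing y with
  | algebraMap r => rw [Algebra.commutes]
  | ι w => exact topCoeff_ι_mul hv hn w y
  | mul a b ha hb => rw [mul_assoc, ha, mul_assoc, hb, mul_assoc]
  | add a b ha hb => rw [add_mul, mul_add, map_add, map_add, ha, hb]

theorem eq_zero_of_mem_span_of_topCoeff_eq_zero (hv : Pairwise fun i j => Q.IsOrtho (v i) (v j))
    {x : CliffordAlgebra Q}
    (hx : x ∈ Submodule.span R (cliffordMonomial Q v '' {l | l.Nodup ∧ l.length = n}))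
    (h_top : topCoeff v x = 0) : x = 0 := by
  set ω := cliffordMonomial Q v (List.finRange n)
  have h_le : Submodule.span R (cliffordMonomial Q v '' {l | l.Nodup ∧ l.length = n})
      ≤ Submodule.span R {ω} := by
    refine Submodule.span_le.2 ?_
    rintro _ ⟨l, ⟨hl, h_length⟩, rfl⟩
    have h_perm : l.Perm (List.finRange n) :=
      (List.subperm_of_subset hl fun i _ => List.mem_finRange i).perm_of_length_le
        (by rw [List.length_finRange, h_length])
    obtain ⟨s, hs⟩ := exists_cliffordMonomial_eq_units_smul_of_perm hv h_perm hl
    exact hs ▸ (Submodule.span R {ω}).smul_of_tower_mem s (Submodule.mem_span_singleton_self ω)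
  obtain ⟨c, rfl⟩ := Submodule.mem_span_singleton.1 (h_le hx)
  rw [map_smul, topCoeff_cliffordMonomial_finRange hv, smul_eq_mul, mul_one] at h_top
  rw [h_top, zero_smul]

theorem mem_range_ι_sup_span_of_involute_eq_neg_of_reverse_eq
    (hv : Pairwise fun i j => Q.IsOrtho (v i) (v j)) (hn : n ≤ 5) {x : CliffordAlgebra Q}
    (h_odd : involute x = -x) (h_rev : reverse x = x) :
    x ∈ LinearMap.range (ι Q) ⊔
      Submodule.span R (cliffordMonomial Q v '' {l | l.Nodup ∧ l.length = 5}) := by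
  have hx := mem_span_cliffordMonomial_of_involute_eq_neg_of_reverse_eq v hv h_odd h_rev
  refine Submodule.span_le.2 ?_ hx
  rintro _ ⟨l, ⟨hl, h_mod⟩, rfl⟩
  have h_card : l.length ≤ 5 := (hl.length_le_card.trans_eq (Fintype.card_fin n)).trans hn
  obtain h_one | h_five : l.length = 1 ∨ l.length = 5 := by omega
  · obtain ⟨i, rfl⟩ := List.length_eq_one_iff.1 h_one
    exact Submodule.mem_sup_left ⟨v i, by simp⟩
  · exact Submodule.mem_sup_right (Submodule.subset_span ⟨l, ⟨hl, h_five⟩, rfl⟩)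

theorem mem_range_ι_of_involute_eq_neg_of_reverse_eq
    (hv : Pairwise fun i j => Q.IsOrtho (v i) (v j)) (hn : n ≤ 5) {x : CliffordAlgebra Q}
    (h_odd : involute x = -x) (h_rev : reverse x = x) (h_top : n = 5 → topCoeff v x = 0) :
    x ∈ LinearMap.range (ι Q) := by
  obtain ⟨_, ⟨w, rfl⟩, z, hz, rfl⟩ := Submodule.mem_sup.1
    (mem_range_ι_sup_span_of_involute_eq_neg_of_reverse_eq hv hn h_odd h_rev)
  suffices hz0 : z = 0 from ⟨w, by rw [hz0, add_zero]⟩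
  rcases hn.eq_or_lt with rfl | h_lt
  · have h_top_z := h_top rfl
    rw [map_add, topCoeff_ι (by norm_num), zero_add] at h_top_z
    exact eq_zero_of_mem_span_of_topCoeff_eq_zero hv hz h_top_z
  · have h_empty : {l : List (Fin n) | l.Nodup ∧ l.length = 5} = ∅ := by
      refine Set.eq_empty_of_forall_notMem fun l ⟨hl, h_five⟩ => ?_
      have h_card := hl.length_le_card
      rw [h_five, Fintype.card_fin] at h_card
      exact h_lt.not_ge h_card
    rwa [h_empty, Set.image_empty, Submodule.span_empty, Submodule.mem_bot] at hz

end TopCoeff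

section ReverseMul

variable {R M : Type*} [CommRing R] [AddCommGroup M] [Module R M]
variable {Q : QuadraticForm R M} {g : CliffordAlgebra Q}

theorem involute_reverse_mul_ι_mul (hg : g ∈ evenOdd Q 0) (u : M) :
    involute (reverse g * ι Q u * g) = -(reverse g * ι Q u * g) := by
  rw [map_mul, map_mul, ← reverse_involute, involute_eq_of_mem_even hg, involute_ι, mul_neg,
    neg_mul]

theorem reverse_reverse_mul_ι_mul (g : CliffordAlgebra Q) (u : M) :
    reverse (reverse g * ι Q u * g) = reverse g * ι Q u * g := by
  rw [reverse.map_mul, reverse.map_mul, reverse_reverse, reverse_ι, mul_assoc]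

theorem topCoeff_reverse_mul_ι_mul [Invertible (2 : R)] {n : ℕ} {v : Basis (Fin n) R M}
    (hv : Pairwise fun i j => Q.IsOrtho (v i) (v j)) (h_odd : Odd n) (h_ne : n ≠ 1) {a : R}
    (hg : g * reverse g = algebraMap R (CliffordAlgebra Q) a) (u : M) :
    topCoeff v (reverse g * ι Q u * g) = 0 := by
  rw [mul_assoc, topCoeff_mul_comm hv h_odd, mul_assoc, hg, ← Algebra.commutes, ← Algebra.smul_def,
    map_smul, topCoeff_ι h_ne, smul_zero]

theorem exists_ι_eq_reverse_mul_ι_mul [Invertible (2 : R)] {n : ℕ} {v : Basis (Fin n) R M}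
    (hv : Pairwise fun i j => Q.IsOrtho (v i) (v j)) (hn : n ≤ 5) (hg_even : g ∈ evenOdd Q 0)
    {a : R} (hg : g * reverse g = algebraMap R (CliffordAlgebra Q) a) (u : M) :
    ∃ w, ι Q w = reverse g * ι Q u * g := by
  refine mem_range_ι_of_involute_eq_neg_of_reverse_eq hv hn
    (involute_reverse_mul_ι_mul hg_even u) (reverse_reverse_mul_ι_mul g u) ?_
  rintro rfl
  exact topCoeff_reverse_mul_ι_mul hv (by decide) (by decide) hg u

end ReverseMul

section DedekindFinite

theorem isDedekindFiniteMonoid_of_module_finite (R A : Type*) [CommRing R] [Ring A] [Algebra R A]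
    [Module.Finite R A] : IsDedekindFiniteMonoid A where
  mul_eq_one_symm {x y} h := by
    have h_surj : Function.Surjective (LinearMap.mulLeft R x) := fun z =>
      ⟨y * z, by rw [LinearMap.mulLeft_apply, ← mul_assoc, h, one_mul]⟩
    refine OrzechProperty.injective_of_surjective_endomorphism _ h_surj ?_
    rw [LinearMap.mulLeft_apply, LinearMap.mulLeft_apply, ← mul_assoc, h, one_mul, mul_one]

theorem mul_eq_algebraMap_comm {R A : Type*} [CommSemiring R] [Semiring A] [Algebra R A]
    [IsDedekindFiniteMonoid A] {x y : A} {a : Rˣ} (h : x * y = algebraMap R A a) :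
    y * x = algebraMap R A a := by
  have h_left : (a⁻¹ • x) * y = 1 := by
    rw [smul_mul_assoc, h, Algebra.algebraMap_eq_smul_one, ← Units.smul_def, inv_smul_smul]
  have h_right : a⁻¹ • (y * x) = 1 := by
    rw [← mul_smul_comm, mul_eq_one_comm.1 h_left]
  rw [Algebra.algebraMap_eq_smul_one, ← Units.smul_def, ← h_right, smul_inv_smul]

end DedekindFinite

theorem exists_basis_pairwise_isOrtho {k V : Type*} [Field k] (h_two : (2 : k) ≠ 0)
    [AddCommGroup V] [Module k V] [FiniteDimensional k V] (Q : QuadraticForm k V) :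
    ∃ v : Basis (Fin (finrank k V)) k V, Pairwise fun i j => Q.IsOrtho (v i) (v j) := by
  have := invertibleOfNonzero h_two
  obtain ⟨v, hv⟩ := LinearMap.BilinForm.exists_orthogonal_basis
    (B := QuadraticMap.associated Q) ⟨QuadraticMap.associated_isSymm k Q⟩
  exact ⟨v, fun i j hij => QuadraticMap.associated_isOrtho.1 (hv hij)⟩

theorem gspin_condition_superfluous_dim_five_general {R M : Type*} [CommRing R] [AddCommGroup M]
    [Module R M] (h_two : IsUnit (2 : R)) {Q : QuadraticForm R M} {n : ℕ} (hn : n ≤ 5)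
    (v : Basis (Fin n) R M) (hv : Pairwise fun i j => Q.IsOrtho (v i) (v j))
    {g : CliffordAlgebra Q} (hg_even : g ∈ evenOdd Q 0)
    (hg_norm : ∃ a : Rˣ, reverse g * g = algebraMap R (CliffordAlgebra Q) a) :
    IsUnit g ∧ ∀ u : M, ∃ w : M, ι Q u * g = g * ι Q w := by
  have := h_two.invertible
  have := finite_cliffordAlgebra_of_orthogonal_basis v hv
  have := isDedekindFiniteMonoid_of_module_finite R (CliffordAlgebra Q)
  obtain ⟨a, ha⟩ := hg_norm
  have ha' : g * reverse g = algebraMap R (CliffordAlgebra Q) a :=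
    mul_eq_algebraMap_comm ha
  have h_comm : Commute g (reverse g) := ha'.trans ha.symm
  refine ⟨(h_comm.isUnit_mul_iff.1 (ha' ▸ a.isUnit.map _)).1, fun u => ?_⟩
  obtain ⟨w, hw⟩ := exists_ι_eq_reverse_mul_ι_mul hv hn hg_even ha' u
  refine ⟨(↑a⁻¹ : R) • w, ?_⟩
  calc ι Q u * g = (↑a⁻¹ : R) • ((a : R) • (ι Q u * g)) := by
        rw [smul_smul, Units.inv_mul, one_smul]
    _ = (↑a⁻¹ : R) • (g * reverse g * (ι Q u * g)) := by rw [ha', ← Algebra.smul_def]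
    _ = g * ι Q ((↑a⁻¹ : R) • w) := by rw [map_smul, mul_smul_comm, hw, mul_assoc, mul_assoc]

/-- Let `(V,Q)` be a regular 5-dimensional quadratic space over a field
`k` of characteristic not 2.  If `g` in the even Clifford algebra satisfies
`g* g ∈ k^×` (with `*` the canonical anti-involution, i.e. reversal), then `g` is a unit
and `g⁻¹ V g = V` (expressed as: for every `v ∈ V` there is `w ∈ V` with
`ι(v) g = g ι(w)`).  Hence `GSpin(V) = {g ∈ Cliff₀(V) : g* g ∈ k^×}`. -/
theorem gspin_condition_superfluous_dim_five
    {k V : Type*} [Field k] [AddCommGroup V] [Module k V]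
    (hchar : (2 : k) ≠ 0)
    (Q : QuadraticForm k V)
    (hreg : ∀ x : V, (∀ y : V, QuadraticMap.polar Q x y = 0) → x = 0)
    [FiniteDimensional k V] (hdim : Module.finrank k V = 5)
    (g : CliffordAlgebra Q)
    (hg_even : g ∈ CliffordAlgebra.evenOdd Q 0)
    (hg_norm : ∃ a : kˣ, CliffordAlgebra.reverse g * g
      = algebraMap k (CliffordAlgebra Q) (a : k)) :
    IsUnit g ∧ ∀ v : V, ∃ w : V,
      CliffordAlgebra.ι Q v * g = g * CliffordAlgebra.ι Q w := by
  obtain ⟨v, hv⟩ := exists_basis_pairwise_isOrtho hchar Q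
  exact gspin_condition_superfluous_dim_five_general hchar.isUnit hdim.le v hv hg_even hg_norm
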